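/- arXiv:1409.8369 — 5 statements merged into one kernel-verified Lean document; each statement's English description precedes it below -/
import Mathlib

section
/- Let n ≥ 2 and d ≥ 3, and let f ∈ ℂ[z_1,…,z_n] be homogeneous of degree d such that the only common zero in ℂⁿ of the partial derivatives f_1,…,f_n is the origin. Let C ∈ GL_n(ℂ) and set g := C·f, i.e., g(z) = f(C⁻¹z). Suppose that for every multi-index I with |I| = n(d−2) there are scalars μ_I and ν_I satisfying z^I − μ_I·H(f) ∈ J(f) and z^I − ν_I·H(g) ∈ J(g), and define A_f := Σ_{|I|=n(d−2)} ((n(d−2))!/I!)·μ_I·z^I and A_g := Σ_{|I|=n(d−2)} ((n(d−2))!/I!)·ν_I·z^I. Then A_g(z) = (det C)²·A_f(Cᵀ·z) as polynomials, i.e., A_g = (det C)²·((C⁻¹)ᵀ·A_f). -/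
/-!
For `|I| = n(d-2)` the relation `h ≡ λ(h) H(f) mod J(f)` gives a linear functional `λ` on forms of
degree `σ = n(d-2)`, and by the multinomial theorem `A_f(w) = λ((w₁z₁ + ⋯ + wₙzₙ)^σ)`
(`linear_pow_sub_mem`). The chain rule shows that a linear substitution with invertible matrix
`B` maps `J(p)` into the Jacobian ideal of `p(Bz)`, and that `H(p(Bz)) = (det B)² H(p)(Bz)`
(`linSubst_mem_jacobianIdeal`, `hessianDet_linSubst`). Transporting the relation defining
`A_g(w)` by `z ↦ Cz` and comparing it with the one defining `A_f(Cᵀw)` yields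
`(A_g(w) - (det C)² A_f(Cᵀw)) H(f) ∈ J(f)`.

It remains to see that `H(f) ∉ J(f)` (`hessianDet_notMem`); otherwise every monomial of degree
`σ` would lie in `J(f)`. In fact `n` forms `F_i` of degree `E + 1` in `n` variables never generate an ideal containing all
monomials of degree `nE` (`exists_monomial_notMem`). Put `G_i = z_i^{E+1} - F_i` and deform `F_i`
to `z_i^{E+1} - s_i G_i`, with a formal parameter `s_i`. Expanding the residue
`Res (h / ∏ (z_i^{E+1} - s_i G_i))` in geometric series gives a linear functional `L` with values
in `ℂ⟦s₁, …, sₙ⟧` such that `L(q z_i^{E+1}) = s_i L(q G_i)` and `L(∏ z_i^E) = 1 + ⋯`. If every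
monomial of degree `nE` were in the ideal of the `F_i`, the values of `L` on these monomials would
be annihilated by a square matrix with entries in `ℂ[s₁, …, sₙ]` which becomes the identity at
`s = (1, …, 1)`. Its determinant is then nonzero, so all the values would vanish.
-/

open MvPolynomial

noncomputable section

/-- The Hessian determinant `H(f)` of a polynomial `f`. -/
def hessianDet {n : ℕ} (f : MvPolynomial (Fin n) ℂ) : MvPolynomial (Fin n) ℂ :=
  (Matrix.of fun i j => pderiv i (pderiv j f)).det

/-- The Jacobian ideal `J(f)` generated by the partial derivatives of `f`. -/
def jacobianIdeal {n : ℕ} (f : MvPolynomial (Fin n) ℂ) : Ideal (MvPolynomial (Fin n) ℂ) :=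
  Ideal.span (Set.range fun i => pderiv i f)

/-! ### A formal residue and monomials outside the ideal of `n` forms -/

/-- The formal residue of `h / ∏ i, (X i ^ (E + 1) - s i * G i)`, where `G i = X i ^ (E + 1) - F i`,
as a power series in the parameters `s i`: the coefficient of `s ^ k` is the coefficient of
`∏ i, X i ^ ((E + 1) * k i + E)` in `h * ∏ i, G i ^ k i`. -/
def formalResidue {n : ℕ} (E : ℕ) (F : Fin n → MvPolynomial (Fin n) ℂ) :
    MvPolynomial (Fin n) ℂ →ₗ[ℂ] MvPowerSeries (Fin n) ℂ where
  toFun h := fun k => MvPolynomial.coeff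
    ((E + 1) • k + Finsupp.equivFunOnFinite.symm (fun _ => E))
    (h * ∏ i, (X i ^ (E + 1) - F i) ^ k i)
  map_add' a b := by
    funext k
    simp only [add_mul, MvPolynomial.coeff_add]
    rfl
  map_smul' c a := by
    funext k
    simp only [smul_mul_assoc, MvPolynomial.coeff_smul, RingHom.id_apply]
    rfl

lemma coeff_formalResidue {n : ℕ} (E : ℕ) (F : Fin n → MvPolynomial (Fin n) ℂ)
    (h : MvPolynomial (Fin n) ℂ) (k : Fin n →₀ ℕ) :
    MvPowerSeries.coeff k (formalResidue E F h) = MvPolynomial.coeff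
      ((E + 1) • k + Finsupp.equivFunOnFinite.symm (fun _ => E))
      (h * ∏ i, (X i ^ (E + 1) - F i) ^ k i) := rfl

/-- The residue, extended linearly over the parameters, annihilates the multiples of the deformed
form `X i ^ (E + 1) - s i * (X i ^ (E + 1) - F i)`: this form cancels one factor of the
denominator, leaving no negative power of `X i`. -/
lemma formalResidue_mul_X_pow {n : ℕ} (E : ℕ) (F : Fin n → MvPolynomial (Fin n) ℂ)
    (q : MvPolynomial (Fin n) ℂ) (i : Fin n) :
    formalResidue E F (q * X i ^ (E + 1)) =
      MvPowerSeries.X i * formalResidue E F (q * (X i ^ (E + 1) - F i)) := by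
  classical
  ext k
  have hswap : q * X i ^ (E + 1) * ∏ j, (X j ^ (E + 1) - F j) ^ k j =
      (q * ∏ j, (X j ^ (E + 1) - F j) ^ k j) * monomial (Finsupp.single i (E + 1)) 1 := by
    rw [← X_pow_eq_monomial]; ring
  rw [coeff_formalResidue, hswap, MvPowerSeries.X, MvPowerSeries.coeff_monomial_mul, one_mul]
  split_ifs with hk
  · obtain ⟨m, rfl⟩ := exists_add_of_le hk
    rw [add_tsub_cancel_left, coeff_formalResidue]
    have hexp : (E + 1) • (Finsupp.single i 1 + m) +
        Finsupp.equivFunOnFinite.symm (fun _ : Fin n => E) =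
        ((E + 1) • m + Finsupp.equivFunOnFinite.symm (fun _ : Fin n => E)) +
          Finsupp.single i (E + 1) := by
      ext j
      by_cases hj : i = j
      · subst hj; simp; ring
      · simp [hj]
    have hprod : ∏ j, (X j ^ (E + 1) - F j) ^ (Finsupp.single i 1 + m : Fin n →₀ ℕ) j =
        (X i ^ (E + 1) - F i) * ∏ j, (X j ^ (E + 1) - F j) ^ m j := by
      simp only [Finsupp.add_apply, pow_add, Finset.prod_mul_distrib]
      congr 1
      rw [Finset.prod_eq_single i]
      · simp
      · intro b _ hb; simp [hb.symm]
      · simp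
    rw [hexp, coeff_mul_monomial, mul_one, hprod, mul_assoc]
  · rw [coeff_mul_monomial', if_neg]
    intro hle
    apply hk
    have h1 := hle i
    rw [Finsupp.single_le_iff]
    by_contra h0
    have h0' : k i = 0 := by omega
    simp [h0'] at h1

/-- By homogeneity, the residue only sees the component of degree `n * E`. -/
lemma formalResidue_monomial_of_degree_ne {n : ℕ} (E : ℕ) (F : Fin n → MvPolynomial (Fin n) ℂ)
    (hF : ∀ i, (F i).IsHomogeneous (E + 1)) (J : Fin n →₀ ℕ) (hJ : J.degree ≠ n * E) :
    formalResidue E F (monomial J 1) = 0 := by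
  ext k
  rw [coeff_formalResidue, map_zero]
  have hG : ∀ i, (X i ^ (E + 1) - F i).IsHomogeneous (E + 1) := fun i => by
    have := (isHomogeneous_X_pow (R := ℂ) i (E + 1)).sub (hF i)
    simpa using this
  have hh : (monomial J (1 : ℂ) * ∏ i, (X i ^ (E + 1) - F i) ^ k i).IsHomogeneous
      (J.degree + ∑ i, (E + 1) * k i) :=
    (isHomogeneous_monomial _ rfl).mul
      (IsHomogeneous.prod _ _ _ fun i _ => (hG i).pow (k i))
  apply hh.coeff_eq_zero
  rw [Finsupp.degree_eq_sum]
  simp [Finset.sum_add_distrib]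
  omega

lemma constantCoeff_formalResidue {n : ℕ} (E : ℕ) (F : Fin n → MvPolynomial (Fin n) ℂ) :
    MvPowerSeries.coeff 0 (formalResidue E F
      (monomial (Finsupp.equivFunOnFinite.symm (fun _ => E)) 1)) = 1 := by
  simp [coeff_formalResidue]

/-- Any `n` forms of degree `E + 1` in `n` variables fail to generate some monomial of
degree `n * E`. -/
lemma exists_monomial_notMem {n : ℕ} (E : ℕ) (F : Fin n → MvPolynomial (Fin n) ℂ)
    (hF : ∀ i, (F i).IsHomogeneous (E + 1)) :
    ∃ J : Fin n →₀ ℕ, J.degree = n * E ∧ monomial J (1 : ℂ) ∉ Ideal.span (Set.range F) := by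
  classical
  by_contra! hcon
  let s : Finset (Fin n →₀ ℕ) := Finset.finsuppAntidiag Finset.univ (n * E)
  have hs : ∀ J, J ∈ s ↔ J.degree = n * E := fun J => by
    simp [s, Finset.mem_finsuppAntidiag, Finsupp.degree_eq_sum]
  have hq : ∀ J : s, ∃ q : Fin n → MvPolynomial (Fin n) ℂ,
      ∑ i, q i * F i = monomial J.1 (1 : ℂ) := fun J =>
    Ideal.mem_span_range_iff_exists_fun.mp (hcon J.1 ((hs _).mp J.2))
  choose q hq using hq
  let L := formalResidue E F
  have hL : ∀ h, L h = ∑ J : s, MvPowerSeries.C (MvPolynomial.coeff J.1 h) *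
      L (monomial J.1 1) := by
    intro h
    rw [Finset.sum_coe_sort s (fun J => MvPowerSeries.C (MvPolynomial.coeff J h) *
      L (monomial J 1))]
    conv_lhs => rw [h.as_sum, map_sum]
    have hterm : ∀ J, L (monomial J (MvPolynomial.coeff J h)) =
        MvPowerSeries.C (MvPolynomial.coeff J h) * L (monomial J 1) := fun J => by
      rw [← MvPowerSeries.smul_eq_C_mul, ← map_smul, smul_monomial, smul_eq_mul, mul_one]
    simp_rw [hterm]
    rw [Finset.sum_subset (Finset.subset_union_left : h.support ⊆ h.support ∪ s),
      ← Finset.sum_subset (Finset.subset_union_right : s ⊆ h.support ∪ s)]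
    · intro J _ hJ
      have : L (monomial J 1) = 0 :=
        formalResidue_monomial_of_degree_ne E F hF J (fun h => hJ ((hs J).mpr h))
      rw [this, mul_zero]
    · intro J _ hJ
      rw [notMem_support_iff.mp hJ, map_zero, zero_mul]
  -- Row `I` encodes the relation
  -- `∑ i, ((1 - s i) L(q I i * X i ^ (E + 1)) + s i L(q I i * F i)) = 0`.
  let M : Matrix s s (MvPolynomial (Fin n) ℂ) := Matrix.of fun I J =>
    ∑ i, ((1 - X i) * C (MvPolynomial.coeff J.1 (q I i * X i ^ (E + 1))) +
      X i * C (MvPolynomial.coeff J.1 (q I i * F i)))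
  have hdet : M.det ≠ 0 := by
    intro h0
    -- At `s = (1, …, 1)` row `I` lists the coefficients of `∑ i, q I i * F i = monomial I 1`.
    have h1 : (eval (fun _ => (1 : ℂ))) M.det = 1 := by
      rw [RingHom.map_det]
      convert! Matrix.det_one (n := s) (R := ℂ)
      ext I J
      simp only [M, RingHom.mapMatrix_apply, Matrix.map_apply, Matrix.of_apply, map_sum, map_add, map_mul, map_sub,
        map_one, eval_X, eval_C, sub_self, zero_mul, one_mul, zero_add]
      rw [← MvPolynomial.coeff_sum, hq, coeff_monomial, Matrix.one_apply]
      exact if_congr Subtype.coe_inj rfl rfl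
    rw [h0, map_zero] at h1
    exact zero_ne_one h1
  let N : Matrix s s (MvPowerSeries (Fin n) ℂ) := (coeToMvPowerSeries.ringHom).mapMatrix M
  have hNdet : N.det ≠ 0 := by
    rw [← RingHom.map_det]
    intro h
    exact hdet (MvPolynomial.coe_eq_zero_iff.mp h)
  let v : s → MvPowerSeries (Fin n) ℂ := fun J => L (monomial J.1 1)
  have hNv : N.mulVec v = 0 := by
    funext I
    have h1 : N.mulVec v I = ∑ i, ((1 - MvPowerSeries.X i) * L (q I i * X i ^ (E + 1)) +
        MvPowerSeries.X i * L (q I i * F i)) := by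
      simp_rw [hL (_ * _), Matrix.mulVec, dotProduct, N, M, v, RingHom.mapMatrix_apply,
        Matrix.map_apply, Matrix.of_apply, map_sum, Finset.sum_mul, Finset.mul_sum, ← Finset.sum_add_distrib]
      rw [Finset.sum_comm]
      refine Finset.sum_congr rfl fun i _ => Finset.sum_congr rfl fun J _ => ?_
      simp only [map_add, map_mul, map_sub, map_one, coeToMvPowerSeries.ringHom_apply, coe_X,
        coe_C]
      ring
    rw [h1]
    refine Finset.sum_eq_zero fun i _ => ?_
    have h2 := formalResidue_mul_X_pow E F (q I i) i
    rw [mul_sub, map_sub] at h2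
    change L _ = _ * (L _ - L _) at h2
    linear_combination h2
  have hv : v ≠ 0 := by
    intro h
    have hmem : Finsupp.equivFunOnFinite.symm (fun _ : Fin n => E) ∈ s := by
      rw [hs, Finsupp.degree_eq_sum]; simp
    have h1 := constantCoeff_formalResidue E F
    have h2 : L (monomial (Finsupp.equivFunOnFinite.symm (fun _ => E)) 1) = 0 :=
      congrFun h ⟨_, hmem⟩
    change MvPowerSeries.coeff 0 (L _) = 1 at h1
    rw [h2, map_zero] at h1
    exact zero_ne_one h1
  have : IsDomain (MvPowerSeries (Fin n) ℂ) := NoZeroDivisors.to_isDomain _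
  exact hNdet (Matrix.exists_mulVec_eq_zero_iff.mp ⟨v, hv, hNv⟩)

/-! ### Linear substitutions -/

/-- The substitution `p(z) ↦ p(B z)`. -/
def linSubst {n : ℕ} (B : Matrix (Fin n) (Fin n) ℂ) :
    MvPolynomial (Fin n) ℂ →ₐ[ℂ] MvPolynomial (Fin n) ℂ :=
  aeval (fun i => ∑ j, C (B i j) * X j)

lemma linSubst_X {n : ℕ} (B : Matrix (Fin n) (Fin n) ℂ) (i : Fin n) :
    linSubst B (X i) = ∑ j, C (B i j) * X j := by simp [linSubst]

lemma linSubst_C {n : ℕ} (B : Matrix (Fin n) (Fin n) ℂ) (a : ℂ) :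
    linSubst B (C a) = C a := by simp [linSubst]

lemma linSubst_linSubst {n : ℕ} (A B : Matrix (Fin n) (Fin n) ℂ) (h : A * B = 1)
    (p : MvPolynomial (Fin n) ℂ) : linSubst B (linSubst A p) = p := by
  have : (linSubst B).comp (linSubst A) = AlgHom.id ℂ _ := by
    ext1 i
    simp only [AlgHom.comp_apply, linSubst_X, map_sum, map_mul, linSubst_C, AlgHom.id_apply,
      Finset.mul_sum]
    rw [Finset.sum_comm]
    simp_rw [← mul_assoc, ← C_mul, ← Finset.sum_mul, ← map_sum]
    have hA : ∀ j, ∑ k, A i k * B k j = (1 : Matrix (Fin n) (Fin n) ℂ) i j := fun j => by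
      rw [← h, Matrix.mul_apply]
    simp [hA, Matrix.one_apply, ite_mul]
  exact DFunLike.congr_fun this p

/-- The chain rule for linear substitutions. -/
lemma pderiv_linSubst {n : ℕ} (B : Matrix (Fin n) (Fin n) ℂ) (i : Fin n)
    (p : MvPolynomial (Fin n) ℂ) :
    pderiv i (linSubst B p) = ∑ k, C (B k i) * linSubst B (pderiv k p) := by
  classical
  induction p using MvPolynomial.induction_on with
  | C a => simp
  | add p q hp hq => simp [hp, hq, mul_add, Finset.sum_add_distrib]
  | mul_X p m hp =>
    have hX : pderiv i (linSubst B (X m)) = C (B m i) := by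
      simp [linSubst_X, pderiv_X, Pi.single_apply]
    have hsum : ∑ k, C (B k i) * (linSubst B p * linSubst B (pderiv k (X m))) =
        linSubst B p * C (B m i) := by
      rw [Finset.sum_eq_single m]
      · simp [mul_comm]
      · intro b _ hb; simp [pderiv_X, hb.symm]
      · simp
    have hrhs : ∑ k, C (B k i) * linSubst B (pderiv k (p * X m)) =
        ∑ k, C (B k i) * (linSubst B p * linSubst B (pderiv k (X m))) +
          linSubst B (X m) * ∑ k, C (B k i) * linSubst B (pderiv k p) := by
      rw [Finset.mul_sum, ← Finset.sum_add_distrib]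
      refine Finset.sum_congr rfl fun k _ => ?_
      rw [Derivation.leibniz, smul_eq_mul, smul_eq_mul, map_add, map_mul, map_mul]
      ring
    rw [hrhs, hsum, map_mul, Derivation.leibniz, hX, hp, smul_eq_mul, smul_eq_mul]

lemma hessianDet_linSubst {n : ℕ} (B : Matrix (Fin n) (Fin n) ℂ) (p : MvPolynomial (Fin n) ℂ) :
    hessianDet (linSubst B p) = C (B.det ^ 2) * linSubst B (hessianDet p) := by
  -- Differentiating twice, the Hessian matrix of `p(B z)` is `Bᵀ * Hess(p)(B z) * B`.
  have hM : (Matrix.of fun i j => pderiv i (pderiv j (linSubst B p))) =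
      (C.mapMatrix B).transpose *
        ((linSubst B).toRingHom.mapMatrix (Matrix.of fun i j => pderiv i (pderiv j p))) *
        C.mapMatrix B := by
    ext1 i j
    simp only [Matrix.of_apply, pderiv_linSubst, map_sum, pderiv_C_mul, Matrix.mul_apply, Matrix.transpose_apply, RingHom.mapMatrix_apply,
      Matrix.map_apply, Finset.sum_mul, Finset.mul_sum]
    refine Finset.sum_congr rfl fun k _ => Finset.sum_congr rfl fun l _ => ?_
    change _ = C (B l i) * linSubst B (pderiv l (pderiv k p)) * C (B k j)
    ring
  unfold hessianDet
  rw [hM, Matrix.det_mul, Matrix.det_mul, Matrix.det_transpose, ← RingHom.map_det,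
    ← RingHom.map_det, C_pow]
  change _ * linSubst B _ * _ = _
  ring

lemma linSubst_mem_jacobianIdeal {n : ℕ} (B : Matrix (Fin n) (Fin n) ℂ) (hB : IsUnit B.det)
    (p : MvPolynomial (Fin n) ℂ) {h : MvPolynomial (Fin n) ℂ} (hh : h ∈ jacobianIdeal p) :
    linSubst B h ∈ jacobianIdeal (linSubst B p) := by
  classical
  suffices hle : jacobianIdeal p ≤ (jacobianIdeal (linSubst B p)).comap (linSubst B) from
    hle hh
  rw [jacobianIdeal, Ideal.span_le]
  rintro _ ⟨k, rfl⟩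
  -- Invert the chain rule: the transformed derivatives are combinations of the new derivatives.
  have hk : linSubst B (pderiv k p) = ∑ i, C (B⁻¹ i k) * pderiv i (linSubst B p) := by
    simp_rw [pderiv_linSubst, Finset.mul_sum]
    rw [Finset.sum_comm]
    have hB' : ∀ l, ∑ i, B l i * B⁻¹ i k = (1 : Matrix (Fin n) (Fin n) ℂ) l k := fun l => by
      rw [← Matrix.mul_nonsing_inv B hB, Matrix.mul_apply]
    simp_rw [← mul_assoc, ← C_mul, mul_comm (B⁻¹ _ _), ← Finset.sum_mul, ← map_sum, hB']
    simp [Matrix.one_apply, ite_mul]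
  change linSubst B (pderiv k p) ∈ jacobianIdeal (linSubst B p)
  rw [hk]
  exact Ideal.sum_mem _ fun i _ => Ideal.mul_mem_left _ _ (Ideal.subset_span ⟨i, rfl⟩)

/-! ### The associated form and powers of linear forms -/

/-- Applied with `H` the Hessian determinant and `K` the Jacobian ideal: the value of the associated
form at `w` is the coefficient of `H` in `(∑ i, w i * X i) ^ N` modulo `K`. -/
lemma linear_pow_sub_mem {n N : ℕ} (H : MvPolynomial (Fin n) ℂ)
    (K : Ideal (MvPolynomial (Fin n) ℂ)) (μ : (Fin n → ℕ) → ℂ)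
    (hμ : ∀ I : Fin n → ℕ, (∑ i, I i) = N → (∏ i, X i ^ I i) - C (μ I) * H ∈ K)
    (w : Fin n → ℂ) :
    (∑ i, C (w i) * X i) ^ N - C (eval w (∑ I ∈ Finset.Nat.antidiagonalTuple n N,
      C ((N.factorial : ℂ) / ∏ i, ((I i).factorial : ℂ)) * C (μ I) * ∏ i, X i ^ I i)) * H ∈ K := by
  classical
  have hset : Finset.piAntidiag (Finset.univ : Finset (Fin n)) N =
      Finset.Nat.antidiagonalTuple n N := by
    ext I; simp [Finset.Nat.mem_antidiagonalTuple]
  rw [Finset.sum_pow_eq_sum_piAntidiag, hset, map_sum, map_sum, Finset.sum_mul,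
    ← Finset.sum_sub_distrib]
  refine Ideal.sum_mem _ fun I hI => ?_
  rw [Finset.Nat.mem_antidiagonalTuple] at hI
  have hmult : ((Nat.multinomial Finset.univ I : ℕ) : ℂ) =
      (N.factorial : ℂ) / ∏ i, ((I i).factorial : ℂ) := by
    rw [eq_div_iff (Finset.prod_ne_zero_iff.mpr fun i _ =>
      Nat.cast_ne_zero.mpr (Nat.factorial_ne_zero _)), ← hI]
    have := Nat.multinomial_spec Finset.univ I
    rw [mul_comm]
    exact_mod_cast this
  have hcast : ((Nat.multinomial Finset.univ I : ℕ) : MvPolynomial (Fin n) ℂ) =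
      C ((N.factorial : ℂ) / ∏ i, ((I i).factorial : ℂ)) := by
    rw [← hmult, map_natCast]
  have hfac := K.mul_mem_left
    (C ((N.factorial : ℂ) / ∏ i, ((I i).factorial : ℂ)) * C (∏ i, w i ^ I i)) (hμ I hI)
  convert hfac using 1
  rw [hcast]
  simp only [mul_pow, Finset.prod_mul_distrib, map_mul, eval_C, map_prod, map_pow, eval_X]
  ring

/-- If the Hessian determinant were in the Jacobian ideal, `hμ` would put every monomial of degree
`n * (d - 2)` there. -/
lemma hessianDet_notMem {n d : ℕ} (hd : 3 ≤ d) (f : MvPolynomial (Fin n) ℂ)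
    (hf : f.IsHomogeneous d) (μ : (Fin n → ℕ) → ℂ)
    (hμ : ∀ I : Fin n → ℕ, (∑ i, I i) = n * (d - 2) →
      (∏ i, X i ^ I i) - C (μ I) * hessianDet f ∈ jacobianIdeal f) :
    hessianDet f ∉ jacobianIdeal f := by
  intro hmem
  obtain ⟨J, hJ, hnot⟩ := exists_monomial_notMem (d - 2) (fun i => pderiv i f) (fun i => by
    have := hf.pderiv (i := i)
    rwa [show d - 1 = d - 2 + 1 by omega] at this)
  apply hnot
  have h1 := hμ J (by rw [← hJ, Finsupp.degree_eq_sum])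
  have h2 := (jacobianIdeal f).add_mem h1 ((jacobianIdeal f).mul_mem_left (C (μ J)) hmem)
  rw [sub_add_cancel] at h2
  rw [monomial_eq, C_1, one_mul, Finsupp.prod_fintype _ _ (fun _ => pow_zero _)]
  exact h2

/-- equivariance of the associated form: if `g = C·f`, i.e.
`g(z) = f(C⁻¹z)`, then the associated forms satisfy
`A_g = (det C)² · ((C⁻¹)ᵀ · A_f)`, i.e. `A_g(z) = (det C)² · A_f(Cᵀ·z)`. -/
theorem associated_form_equivariance (n d : ℕ) (hn : 2 ≤ n) (hd : 3 ≤ d)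
    (f : MvPolynomial (Fin n) ℂ) (hf : f.IsHomogeneous d)
    (hnd : ∀ z : Fin n → ℂ, (∀ i, eval z (pderiv i f) = 0) → z = 0)
    (Cm : Matrix (Fin n) (Fin n) ℂ) (hC : IsUnit Cm.det)
    (g : MvPolynomial (Fin n) ℂ)
    (hg : g = aeval (fun i => ∑ j, MvPolynomial.C (Cm⁻¹ i j) * X j) f)
    (μ ν : (Fin n → ℕ) → ℂ)
    (hμ : ∀ I : Fin n → ℕ, (∑ i, I i) = n * (d - 2) →
      (∏ i, X i ^ I i) - MvPolynomial.C (μ I) * hessianDet f ∈ jacobianIdeal f)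
    (hν : ∀ I : Fin n → ℕ, (∑ i, I i) = n * (d - 2) →
      (∏ i, X i ^ I i) - MvPolynomial.C (ν I) * hessianDet g ∈ jacobianIdeal g)
    (Af Ag : MvPolynomial (Fin n) ℂ)
    (hAf : Af = ∑ I ∈ Finset.Nat.antidiagonalTuple n (n * (d - 2)),
      MvPolynomial.C (((n * (d - 2)).factorial : ℂ) / ∏ i, ((I i).factorial : ℂ)) *
        MvPolynomial.C (μ I) * ∏ i, X i ^ I i)
    (hAg : Ag = ∑ I ∈ Finset.Nat.antidiagonalTuple n (n * (d - 2)),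
      MvPolynomial.C (((n * (d - 2)).factorial : ℂ) / ∏ i, ((I i).factorial : ℂ)) *
        MvPolynomial.C (ν I) * ∏ i, X i ^ I i) :
    Ag = MvPolynomial.C (Cm.det ^ 2) *
      aeval (fun i => ∑ j, MvPolynomial.C (Cm j i) * X j) Af := by
  subst hg
  have hCC : Cm⁻¹ * Cm = 1 := Matrix.nonsing_inv_mul Cm hC
  have hback : linSubst Cm (linSubst Cm⁻¹ f) = f := linSubst_linSubst _ _ hCC f
  change ∀ I : Fin n → ℕ, (∑ i, I i) = n * (d - 2) →
      (∏ i, X i ^ I i) - MvPolynomial.C (ν I) * hessianDet (linSubst Cm⁻¹ f) ∈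
        jacobianIdeal (linSubst Cm⁻¹ f) at hν
  have hH := hessianDet_notMem hd f hf μ hμ
  refine MvPolynomial.funext fun w => ?_
  have hf1 := linear_pow_sub_mem _ _ μ hμ (fun i => ∑ j, Cm j i * w j)
  have hg1 := linSubst_mem_jacobianIdeal Cm hC _ (linear_pow_sub_mem _ _ ν hν w)
  rw [← hAf] at hf1
  rw [← hAg, hback] at hg1
  have hlin : linSubst Cm (∑ i, MvPolynomial.C (w i) * X i) =
      ∑ i, MvPolynomial.C (∑ j, Cm j i * w j) * X i := by
    simp only [map_sum, map_mul, linSubst_C, linSubst_X, Finset.mul_sum, Finset.sum_mul]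
    rw [Finset.sum_comm]
    exact Finset.sum_congr rfl fun i _ => Finset.sum_congr rfl fun j _ => by ring
  have hHf := hessianDet_linSubst Cm (linSubst Cm⁻¹ f)
  rw [hback] at hHf
  rw [map_sub, map_pow, map_mul, linSubst_C, hlin] at hg1
  have heval : eval w (aeval (fun i => ∑ j, MvPolynomial.C (Cm j i) * X j) Af) =
      eval (fun i => ∑ j, Cm j i * w j) Af := by
    rw [← MvPolynomial.coe_aeval_eq_eval, RingHom.coe_coe, ← AlgHom.comp_apply,
      MvPolynomial.comp_aeval, ← MvPolynomial.coe_aeval_eq_eval, RingHom.coe_coe]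
    congr 2
    funext i
    simp
  rw [map_mul, eval_C, heval]
  -- A nonzero difference of the two values would give `H(f) ∈ J(f)`.
  by_contra hne
  apply hH
  have hdiff := (jacobianIdeal f).mul_mem_left (MvPolynomial.C (Cm.det ^ 2))
    ((jacobianIdeal f).sub_mem hf1 hg1)
  set a := eval w Ag
  set b := eval (fun i => ∑ j, Cm j i * w j) Af
  have hscal : MvPolynomial.C (a - Cm.det ^ 2 * b) * hessianDet f ∈ jacobianIdeal f := by
    convert hdiff using 1
    rw [map_sub, map_mul]
    linear_combination MvPolynomial.C a * hHf
  have hunit := (jacobianIdeal f).mul_mem_left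
    (MvPolynomial.C (a - Cm.det ^ 2 * b)⁻¹) hscal
  rwa [← mul_assoc, ← C_mul, inv_mul_cancel₀ (sub_ne_zero.mpr hne), C_1, one_mul] at hunit

end
end

section
/- Let t ∈ ℂ with t² ≠ 4, and let q_t := z_1⁴ + t·z_1²z_2² + z_2⁴ ∈ ℂ[z_1,z_2]. Let J_t be the ideal generated by ∂q_t/∂z_1 = 4z_1³ + 2t·z_1z_2² and ∂q_t/∂z_2 = 2t·z_1²z_2 + 4z_2³, and let H_t := (∂²q_t/∂z_1²)(∂²q_t/∂z_2²) − (∂²q_t/∂z_1∂z_2)² be the Hessian determinant of q_t. Then: z_1³z_2 ∈ J_t; z_1z_2³ ∈ J_t; z_1⁴ − (t/(72(t²−4)))·H_t ∈ J_t; z_2⁴ − (t/(72(t²−4)))·H_t ∈ J_t; and z_1²z_2² + (1/(36(t²−4)))·H_t ∈ J_t. Consequently the associated form of q_t is 𝐪_t = (1/(72(t²−4)))·(t·z_1⁴ − 12·z_1²z_2² + t·z_2⁴). -/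
/-!
Write `x = X 0`, `y = X 1`, `D = t² - 4`. The memberships are explicit combinations of the two
partial derivatives `4x³ + 2txy²` and `2tx²y + 4y³` of `q_t`.

For the formula for the associated quartic, the scalars `μ_{ij}` have to be determined by the
congruences, i.e. the class of the Hessian modulo the Jacobian ideal has to be nonzero. This is
seen by apolarity: the functional `p ↦ (t ∂_x⁴ - 12 ∂_x²∂_y² + t ∂_y⁴) p (0)` (`apolar`), in which
the claimed quartic appears, up to a scalar, with `x, y` replaced by `∂_x, ∂_y`, kills the Jacobian
ideal (`apolar_eq_zero_of_mem_jac`) and takes the value `1728 D ≠ 0` on the Hessian (`apolar_hess`).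
Applying it to the congruences gives every `μ_{ij}`.
-/

open MvPolynomial

noncomputable section

/-- Binary forms: polynomials in two variables over ℂ. -/
abbrev P2 := MvPolynomial (Fin 2) ℂ

/-- The Hessian determinant `H(f) = f_{11}f_{22} − f_{12}²` of a binary form. -/
def hess (f : P2) : P2 :=
  pderiv 0 (pderiv 0 f) * pderiv 1 (pderiv 1 f) - pderiv 0 (pderiv 1 f) ^ 2

/-- The Jacobian ideal `J(f) = (f_1, f_2)`. -/
def jac (f : P2) : Ideal P2 := Ideal.span {pderiv 0 f, pderiv 1 f}

/-- The associated quartic `A_f := Σ_{i+j=4} (24/(i!·j!))·μ_{ij}·z_1^i z_2^j`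
built from scalars `μ_{ij}`. -/
def assocQuartic (μ : ℕ → ℕ → ℂ) : P2 :=
  ∑ i ∈ Finset.range 5,
    MvPolynomial.C ((24 : ℂ) / ((i.factorial : ℂ) * ((4 - i).factorial : ℂ))) *
      MvPolynomial.C (μ i (4 - i)) * X 0 ^ i * X 1 ^ (4 - i)

/-- The quartic `q_t = z_1⁴ + t·z_1²z_2² + z_2⁴`. -/
def qt (t : ℂ) : P2 := X 0 ^ 4 + MvPolynomial.C t * X 0 ^ 2 * X 1 ^ 2 + X 1 ^ 4

lemma pderiv_zero_qt (t : ℂ) :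
    pderiv 0 (qt t) = 4 * X 0 ^ 3 + 2 * C t * X 0 * X 1 ^ 2 := by
  simp [qt, pderiv_X, Derivation.leibniz, Derivation.leibniz_pow]
  ring

lemma pderiv_one_qt (t : ℂ) :
    pderiv 1 (qt t) = 2 * C t * X 0 ^ 2 * X 1 + 4 * X 1 ^ 3 := by
  simp [qt, pderiv_X, Derivation.leibniz, Derivation.leibniz_pow]
  ring

/-- `no_index` lets `simp` match numerals whose `OfNat` instance on `P2` is not syntactically the
generic one; the same applies to `constantCoeff_ofNat`. -/
lemma pderiv_ofNat (i : Fin 2) (n : ℕ) [n.AtLeastTwo] :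
    pderiv i (no_index (OfNat.ofNat n) : P2) = 0 :=
  Derivation.map_natCast (pderiv i) n

lemma constantCoeff_ofNat (n : ℕ) [n.AtLeastTwo] :
    constantCoeff (no_index (OfNat.ofNat n) : P2) = OfNat.ofNat n :=
  map_ofNat _ n

lemma hess_qt (t : ℂ) :
    hess (qt t) = 24 * C t * (X 0 ^ 4 + X 1 ^ 4) + (144 - 12 * C t ^ 2) * X 0 ^ 2 * X 1 ^ 2 := by
  simp [hess, pderiv_zero_qt, pderiv_one_qt, pderiv_X, Derivation.leibniz,
    Derivation.leibniz_pow, pderiv_ofNat]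
  ring

/-- Membership in the Jacobian ideal of `q_t`, as an explicit combination of the partials. -/
lemma mem_jac_qt {t : ℂ} {p : P2} :
    p ∈ jac (qt t) ↔ ∃ a b : P2, a * (4 * X 0 ^ 3 + 2 * C t * X 0 * X 1 ^ 2) +
      b * (2 * C t * X 0 ^ 2 * X 1 + 4 * X 1 ^ 3) = p := by
  rw [jac, pderiv_zero_qt, pderiv_one_qt, Ideal.mem_span_pair]

/-- The apolarity functional `p ↦ (t ∂_x⁴ - 12 ∂_x²∂_y² + t ∂_y⁴) p (0)`. -/
def apolar (t : ℂ) (p : P2) : ℂ :=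
  t * eval 0 (pderiv 0 (pderiv 0 (pderiv 0 (pderiv 0 p))))
    - 12 * eval 0 (pderiv 0 (pderiv 0 (pderiv 1 (pderiv 1 p))))
    + t * eval 0 (pderiv 1 (pderiv 1 (pderiv 1 (pderiv 1 p))))

lemma apolar_sub (t : ℂ) (p q : P2) : apolar t (p - q) = apolar t p - apolar t q := by
  simp only [apolar, map_sub]
  ring

lemma apolar_add (t : ℂ) (p q : P2) : apolar t (p + q) = apolar t p + apolar t q := by
  simp only [apolar, map_add]
  ring

lemma apolar_C_mul (t c : ℂ) (p : P2) : apolar t (C c * p) = c * apolar t p := by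
  simp only [apolar, pderiv_C_mul, map_mul, eval_C]
  ring

/-- Only the first derivatives of `a` and the third derivatives of `∂_x q_t` survive at the
origin, and their contributions cancel. -/
lemma apolar_mul_left (t : ℂ) (a : P2) :
    apolar t (a * (4 * X 0 ^ 3 + 2 * C t * X 0 * X 1 ^ 2)) = 0 := by
  simp [apolar, pderiv_X, Derivation.leibniz, Derivation.leibniz_pow, pderiv_ofNat,
    constantCoeff_ofNat]
  ring

lemma apolar_mul_right (t : ℂ) (b : P2) :
    apolar t (b * (2 * C t * X 0 ^ 2 * X 1 + 4 * X 1 ^ 3)) = 0 := by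
  simp [apolar, pderiv_X, Derivation.leibniz, Derivation.leibniz_pow, pderiv_ofNat,
    constantCoeff_ofNat]
  ring

lemma apolar_eq_zero_of_mem_jac {t : ℂ} {p : P2} (hp : p ∈ jac (qt t)) : apolar t p = 0 := by
  obtain ⟨a, b, rfl⟩ := mem_jac_qt.1 hp
  rw [apolar_add, apolar_mul_left, apolar_mul_right, add_zero]

lemma apolar_hess (t : ℂ) : apolar t (hess (qt t)) = 1728 * (t ^ 2 - 4) := by
  rw [hess_qt]
  simp [apolar, pderiv_X, Derivation.leibniz, Derivation.leibniz_pow, pderiv_ofNat,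
    constantCoeff_ofNat]
  ring

/-- The scalars in the congruences are determined by the apolarity functional. -/
lemma mu_eq {t m : ℂ} {p : P2} (ht : t ^ 2 - 4 ≠ 0)
    (h : p - C m * hess (qt t) ∈ jac (qt t)) : m = apolar t p / (1728 * (t ^ 2 - 4)) := by
  have h0 := apolar_eq_zero_of_mem_jac h
  rw [apolar_sub, apolar_C_mul, apolar_hess] at h0
  rw [eq_div_iff (mul_ne_zero (by norm_num) ht)]
  linear_combination -h0

/-- the explicit ideal membership relations for `q_t` (`t² ≠ 4`), and
consequently the associated form of `q_t` is
`(1/(72(t²−4)))·(t·z_1⁴ − 12·z_1²z_2² + t·z_2⁴)`. -/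
theorem assoc_form_of_qt (t : ℂ) (ht : t ^ 2 ≠ 4) :
    X 0 ^ 3 * X 1 ∈ jac (qt t) ∧
    X 0 * X 1 ^ 3 ∈ jac (qt t) ∧
    X 0 ^ 4 - MvPolynomial.C (t / (72 * (t ^ 2 - 4))) * hess (qt t) ∈ jac (qt t) ∧
    X 1 ^ 4 - MvPolynomial.C (t / (72 * (t ^ 2 - 4))) * hess (qt t) ∈ jac (qt t) ∧
    X 0 ^ 2 * X 1 ^ 2 + MvPolynomial.C (1 / (36 * (t ^ 2 - 4))) * hess (qt t) ∈ jac (qt t) ∧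
    ∀ μ : ℕ → ℕ → ℂ,
      (∀ i j : ℕ, i + j = 4 →
        X 0 ^ i * X 1 ^ j - MvPolynomial.C (μ i j) * hess (qt t) ∈ jac (qt t)) →
      assocQuartic μ =
        MvPolynomial.C (1 / (72 * (t ^ 2 - 4))) *
          (MvPolynomial.C t * X 0 ^ 4 - MvPolynomial.C 12 * X 0 ^ 2 * X 1 ^ 2 +
            MvPolynomial.C t * X 1 ^ 4) := by
  have hD : t ^ 2 - 4 ≠ 0 := sub_ne_zero.2 ht
  -- `k = 1/72` and `u = 1/D` as constant polynomials, so that every identity below is one in a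
  -- commutative ring modulo the two relations `hk` and `hu`.
  obtain ⟨k, hkdef⟩ : ∃ k : P2, k = C (1 / 72) := ⟨_, rfl⟩
  obtain ⟨u, hudef⟩ : ∃ u : P2, u = C (1 / (t ^ 2 - 4)) := ⟨_, rfl⟩
  have hk : 72 * k = 1 := by
    rw [hkdef, show (72 : P2) = C 72 from (map_ofNat C 72).symm, ← C_mul]
    norm_num
  have hu : u * (C t ^ 2 - 4) = 1 := by
    rw [hudef, show (4 : P2) = C 4 from (map_ofNat C 4).symm, ← C_pow, ← C_sub, ← C_mul,
      one_div_mul_cancel hD, C_1]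
  have h1 : (C (t / (72 * (t ^ 2 - 4))) : P2) = C t * k * u := by
    rw [hkdef, hudef, ← C_mul, ← C_mul]
    congr 1
    field_simp
  have h2 : (C (1 / (36 * (t ^ 2 - 4))) : P2) = 2 * k * u := by
    rw [hkdef, hudef, show (2 : P2) = C 2 from (map_ofNat C 2).symm, ← C_mul, ← C_mul]
    congr 1
    field_simp
    norm_num
  rw [h1, h2]
  refine ⟨?_, ?_, ?_, ?_, ?_, ?_⟩
  · refine mem_jac_qt.2 ⟨-72 * k * u * X 1, 36 * k * u * C t * X 0, ?_⟩
    linear_combination X 0 ^ 3 * X 1 * (u * (C t ^ 2 - 4) * hk + hu)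
  · refine mem_jac_qt.2 ⟨36 * k * u * C t * X 1, -72 * k * u * X 0, ?_⟩
    linear_combination X 0 * X 1 ^ 3 * (u * (C t ^ 2 - 4) * hk + hu)
  · refine mem_jac_qt.2 ⟨18 * k * X 0 - 6 * C t ^ 2 * k * u * X 0, -6 * C t ^ 2 * k * u * X 1, ?_⟩
    rw [hess_qt]
    linear_combination X 0 ^ 4 * hk - 36 * k * C t * X 0 ^ 2 * X 1 ^ 2 * hu
  · refine mem_jac_qt.2 ⟨-6 * C t ^ 2 * k * u * X 0, 18 * k * X 1 - 6 * C t ^ 2 * k * u * X 1, ?_⟩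
    rw [hess_qt]
    linear_combination X 1 ^ 4 * hk - 36 * k * C t * X 0 ^ 2 * X 1 ^ 2 * hu
  · refine mem_jac_qt.2 ⟨12 * C t * k * u * X 0, 12 * C t * k * u * X 1, ?_⟩
    rw [hess_qt]
    linear_combination X 0 ^ 2 * X 1 ^ 2 * (u * (C t ^ 2 - 4) * hk + hu)
  · intro μ hμ
    have m04 := mu_eq hD (hμ 0 4 rfl)
    have m13 := mu_eq hD (hμ 1 3 rfl)
    have m22 := mu_eq hD (hμ 2 2 rfl)
    have m31 := mu_eq hD (hμ 3 1 rfl)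
    have m40 := mu_eq hD (hμ 4 0 rfl)
    simp [apolar, pderiv_X, Derivation.leibniz, Derivation.leibniz_pow, pderiv_ofNat,
    constantCoeff_ofNat]
      at m04 m13 m22 m31 m40
    have c4 : t * (4 * (3 * 2)) / (1728 * (t ^ 2 - 4)) = 1 / (72 * (t ^ 2 - 4)) * t := by
      field_simp
      ring
    have c2 : 24 / (2 * 2) * (-(12 * (2 * 2)) / (1728 * (t ^ 2 - 4))) =
        -(1 / (72 * (t ^ 2 - 4)) * 12) := by
      field_simp
      norm_num
    have f4 : (24 : ℂ) / (Nat.factorial 4 : ℂ) = 1 := by norm_num [Nat.factorial]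
    simp only [assocQuartic, Finset.sum_range_succ, Finset.sum_range_zero, Nat.sub_zero,
      Nat.reduceSub, m04, m13, m22, m31, m40, c4, Nat.factorial_zero, Nat.factorial_two,
      Nat.cast_one, Nat.cast_ofNat, one_mul, mul_one, f4, ← C_mul, c2]
    simp only [C_mul, C_neg, C_0]
    ring

end
end

section
/- Let f = a·z_1⁴ + 4b·z_1³z_2 + 6c·z_1²z_2² + 4d·z_1z_2³ + e·z_2⁴ ∈ ℂ[z_1,z_2] be a binary quartic with Δ(f) ≠ 0. Suppose scalars μ_{ij} (i+j=4) satisfy z_1^i z_2^j − μ_{ij}·H(f) ∈ J(f), and let A_f := Σ_{i+j=4} (24/(i!·j!))·μ_{ij}·z_1^i z_2^j be the associated quartic. Then: I2(A_f) = I2(f)/(2⁸·3³·Δ(f)), I3(A_f) = −1/(2¹²·3⁶·Δ(f)), and Δ(A_f) = I3(f)²/(2²⁴·3⁶·Δ(f)³). In particular I3(A_f) ≠ 0, and Δ(A_f) = 0 if and only if I3(f) = 0. -/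
/-!
The quartics in `J(f)` are spanned by `z_1 f_1, z_2 f_1, z_1 f_2, z_2 f_2`, a hyperplane when
`Δ(f) ≠ 0`. It is cut out by the linear functional whose coefficients are those of
`2·I2(f)·G − 3·I3(f)·F`, where `F = (e, −d, c, −b, a)` and `G` are the coefficient vectors, with
binomial factors removed, of `f(−z_2, z_1)` and of its Hessian up to a constant
(`functional_eq_zero_of_mem_jac`). This functional takes the value `48·Δ(f)` on `H(f)`
(`functional_hess`). Applying it to `z_1^i z_2^j − μ_{ij}·H(f) ∈ J(f)` therefore determines
`48·Δ(f)·μ_{ij}`, which is the corresponding coefficient of the functional. The `μ_{ij}` are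
exactly the binomially normalized coefficients of `A_f`, so the formulas for `I2(A_f)` and
`I3(A_f)` become polynomial identities in `a, b, c, d, e`: the classical values of the invariants
of a member of the pencil spanned by a quartic and its Hessian. The formula for `Δ(A_f)` and the
two final assertions follow from those two.
-/


open MvPolynomial

noncomputable section

/-- The coefficient of `z_1^i z_2^j` in a binary form. -/
def cf (f : P2) (i j : ℕ) : ℂ :=
  coeff (Finsupp.single 0 i + Finsupp.single 1 j) f

/-- The invariant `I2(f) = ae − 4bd + 3c²` of a binary quartic
`f = a·z_1⁴ + 4b·z_1³z_2 + 6c·z_1²z_2² + 4d·z_1z_2³ + e·z_2⁴`. -/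
def I2 (f : P2) : ℂ :=
  cf f 4 0 * cf f 0 4 - 4 * (cf f 3 1 / 4) * (cf f 1 3 / 4) + 3 * (cf f 2 2 / 6) ^ 2

/-- The invariant `I3(f) = ace + 2bcd − ad² − b²e − c³` (the catalecticant). -/
def I3 (f : P2) : ℂ :=
  cf f 4 0 * (cf f 2 2 / 6) * cf f 0 4 +
    2 * (cf f 3 1 / 4) * (cf f 2 2 / 6) * (cf f 1 3 / 4) -
    cf f 4 0 * (cf f 1 3 / 4) ^ 2 - (cf f 3 1 / 4) ^ 2 * cf f 0 4 - (cf f 2 2 / 6) ^ 3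

/-- The discriminant `Δ(f) = I2(f)³ − 27·I3(f)²` of a binary quartic. -/
def disc (f : P2) : ℂ := I2 f ^ 3 - 27 * I3 f ^ 2

/-- The binary quartic `a·z_1⁴ + 4b·z_1³z_2 + 6c·z_1²z_2² + 4d·z_1z_2³ + e·z_2⁴`. -/
def quartic (a b c d e : ℂ) : P2 :=
  MvPolynomial.C a * X 0 ^ 4 + MvPolynomial.C (4 * b) * X 0 ^ 3 * X 1 +
    MvPolynomial.C (6 * c) * X 0 ^ 2 * X 1 ^ 2 + MvPolynomial.C (4 * d) * X 0 * X 1 ^ 3 +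
    MvPolynomial.C e * X 1 ^ 4

/-- The substitution `(z_1, z_2) ↦ (−z_2, z_1)`, i.e. `g ↦ g(−z_2, z_1)`. -/
def twist (g : P2) : P2 := aeval ![-(X 1 : P2), X 0] g

/-- `I2` of the quartic with binomially normalized coefficients `a, b, c, d, e`. -/
def i2 (a b c d e : ℂ) : ℂ := a * e - 4 * b * d + 3 * c ^ 2

/-- `I3` of the quartic with binomially normalized coefficients `a, b, c, d, e`. -/
def i3 (a b c d e : ℂ) : ℂ :=
  a * c * e + 2 * b * c * d - a * d ^ 2 - b ^ 2 * e - c ^ 3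

/-- The weight of `z_1^i z_2^(4-i)` in the functional on quartics that annihilates the degree-four
part of the Jacobian ideal of `quartic a b c d e`; it is set to `0` for `i > 4`. -/
def weight (a b c d e : ℂ) : ℕ → ℂ
  | 4 => 2 * i2 a b c d e * (c * e - d ^ 2) - 3 * i3 a b c d e * e
  | 3 => 2 * i2 a b c d e * (-(b * e - c * d) / 2) + 3 * i3 a b c d e * d
  | 2 => 2 * i2 a b c d e * ((a * e + 2 * b * d - 3 * c ^ 2) / 6) - 3 * i3 a b c d e * c
  | 1 => 2 * i2 a b c d e * (-(a * d - b * c) / 2) + 3 * i3 a b c d e * b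
  | 0 => 2 * i2 a b c d e * (a * c - b ^ 2) - 3 * i3 a b c d e * a
  | _ => 0

/-- The functional on binary forms, reading only the degree-four coefficients, which annihilates
the Jacobian ideal of `quartic a b c d e`. -/
def functional (a b c d e : ℂ) (g : P2) : ℂ :=
  weight a b c d e 4 * cf g 4 0 + weight a b c d e 3 * cf g 3 1 +
    weight a b c d e 2 * cf g 2 2 + weight a b c d e 1 * cf g 1 3 + weight a b c d e 0 * cf g 0 4

lemma cf_add (p q : P2) (i j : ℕ) : cf (p + q) i j = cf p i j + cf q i j := by
  simp [cf]

lemma cf_sub (p q : P2) (i j : ℕ) : cf (p - q) i j = cf p i j - cf q i j := by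
  simp [cf]

lemma cf_C_mul (r : ℂ) (p : P2) (i j : ℕ) : cf (C r * p) i j = r * cf p i j := by
  simp [cf]

/-- The monomial `r·z_1^m z_2^n`. -/
def bmon (r : ℂ) (m n : ℕ) : P2 := C r * X 0 ^ m * X 1 ^ n

lemma bmon_eq (r : ℂ) (m n : ℕ) :
    bmon r m n = monomial (Finsupp.single 0 m + Finsupp.single 1 n) r := by
  rw [bmon, X_pow_eq_monomial, X_pow_eq_monomial, C_mul_monomial, monomial_mul]
  simp

lemma single_add_le (i j m n : ℕ) :
    (Finsupp.single (0 : Fin 2) m + Finsupp.single 1 n ≤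
      Finsupp.single (0 : Fin 2) i + Finsupp.single 1 j) ↔ m ≤ i ∧ n ≤ j := by
  rw [Finsupp.le_def]
  simp [Fin.forall_fin_two]

lemma cf_mul_bmon (p : P2) (r : ℂ) (m n i j : ℕ) :
    cf (p * bmon r m n) i j = if m ≤ i ∧ n ≤ j then r * cf p (i - m) (j - n) else 0 := by
  rw [cf, bmon_eq, coeff_mul_monomial']
  simp only [single_add_le]
  split_ifs with h
  · rw [mul_comm, cf]
    congr 2
    ext k
    fin_cases k <;> simp
  · rfl

lemma cf_one (i j : ℕ) : cf 1 i j = if i = 0 ∧ j = 0 then 1 else 0 := by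
  rw [cf, coeff_one]
  congr 1
  rw [eq_iff_iff, Finsupp.ext_iff]
  simp [Fin.forall_fin_two, eq_comm]

lemma cf_bmon (r : ℂ) (m n i j : ℕ) :
    cf (bmon r m n) i j = if i = m ∧ j = n then r else 0 := by
  have h := cf_mul_bmon 1 r m n i j
  rw [one_mul] at h
  rw [h, cf_one]
  split_ifs <;> first | omega | simp

lemma quartic_eq (a b c d e : ℂ) :
    quartic a b c d e = bmon a 4 0 + bmon (4 * b) 3 1 + bmon (6 * c) 2 2 + bmon (4 * d) 1 3 +
      bmon e 0 4 := by
  simp [quartic, bmon]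

lemma I2_quartic (a b c d e : ℂ) : I2 (quartic a b c d e) = i2 a b c d e := by
  simp [I2, quartic_eq, cf_add, cf_bmon, i2]

lemma I3_quartic (a b c d e : ℂ) : I3 (quartic a b c d e) = i3 a b c d e := by
  simp [I3, quartic_eq, cf_add, cf_bmon, i3]

lemma assocQuartic_eq (μ : ℕ → ℕ → ℂ) :
    assocQuartic μ = quartic (μ 4 0) (μ 3 1) (μ 2 2) (μ 1 3) (μ 0 4) := by
  simp only [assocQuartic, Finset.sum_range_succ, Finset.sum_range_zero, quartic, ← C_mul]
  norm_num [Nat.factorial]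
  ring

lemma C_numeral (n : ℕ) [n.AtLeastTwo] : (C (ofNat(n) : ℂ) : P2) = ofNat(n) :=
  map_ofNat C n

lemma pderiv_zero_bmon (r : ℂ) (m n : ℕ) :
    pderiv 0 (bmon r m n) = bmon (r * m) (m - 1) n := by
  simp only [bmon_eq, pderiv_monomial]
  congr 2
  · refine Finsupp.ext fun k => ?_
    fin_cases k <;> simp
  · simp

lemma pderiv_one_bmon (r : ℂ) (m n : ℕ) :
    pderiv 1 (bmon r m n) = bmon (r * n) m (n - 1) := by
  simp only [bmon_eq, pderiv_monomial]
  congr 2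
  · refine Finsupp.ext fun k => ?_
    fin_cases k <;> simp
  · simp

lemma pderiv_zero_quartic (a b c d e : ℂ) :
    pderiv 0 (quartic a b c d e) =
      bmon (4 * a) 3 0 + bmon (12 * b) 2 1 + bmon (12 * c) 1 2 + bmon (4 * d) 0 3 := by
  simp only [quartic_eq, map_add, pderiv_zero_bmon]
  simp [bmon, C_numeral]
  ring

lemma pderiv_one_quartic (a b c d e : ℂ) :
    pderiv 1 (quartic a b c d e) =
      bmon (4 * b) 3 0 + bmon (12 * c) 2 1 + bmon (12 * d) 1 2 + bmon (4 * e) 0 3 := by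
  simp only [quartic_eq, map_add, pderiv_one_bmon]
  simp [bmon, C_numeral]
  ring

lemma hess_quartic (a b c d e : ℂ) :
    hess (quartic a b c d e) =
      bmon (144 * (a * c - b ^ 2)) 4 0 + bmon (288 * (a * d - b * c)) 3 1 +
      bmon (144 * (a * e + 2 * b * d - 3 * c ^ 2)) 2 2 + bmon (288 * (b * e - c * d)) 1 3 +
      bmon (144 * (c * e - d ^ 2)) 0 4 := by
  simp only [hess, pderiv_zero_quartic, pderiv_one_quartic, map_add, pderiv_zero_bmon,
    pderiv_one_bmon]
  simp [bmon, C_numeral]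
  ring

lemma functional_eq_zero_of_mem_jac (a b c d e : ℂ) {g : P2}
    (hg : g ∈ jac (quartic a b c d e)) : functional a b c d e g = 0 := by
  obtain ⟨p, q, rfl⟩ := Ideal.mem_span_pair.1 hg
  rw [pderiv_zero_quartic, pderiv_one_quartic]
  simp only [functional, mul_add, cf_add, cf_mul_bmon]
  -- Only the linear coefficients of the multipliers `p` and `q` reach degree four.
  norm_num [weight, i2, i3]
  ring

lemma functional_hess (a b c d e : ℂ) :
    functional a b c d e (hess (quartic a b c d e)) = 48 * disc (quartic a b c d e) := by
  rw [disc, I2_quartic, I3_quartic, hess_quartic]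
  simp only [functional, cf_add, cf_bmon]
  norm_num [weight, i2, i3]
  ring

/-- The scalars `μ_{ij}` are determined: `48·Δ(f)·μ_{ij}` is a coefficient of the functional. -/
lemma disc_mul_mu (a b c d e m : ℂ) {i j : ℕ} (hij : i + j = 4)
    (h : X 0 ^ i * X 1 ^ j - C m * hess (quartic a b c d e) ∈ jac (quartic a b c d e)) :
    48 * disc (quartic a b c d e) * m = weight a b c d e i := by
  have h1 := functional_eq_zero_of_mem_jac a b c d e h
  have h2 : functional a b c d e (X 0 ^ i * X 1 ^ j - C m * hess (quartic a b c d e)) =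
      functional a b c d e (bmon 1 i j) -
        m * functional a b c d e (hess (quartic a b c d e)) := by
    simp only [functional, cf_sub, cf_C_mul, bmon, C_1, one_mul]
    ring
  have h3 : functional a b c d e (bmon 1 i j) = weight a b c d e i := by
    have hi : i ≤ 4 := by omega
    obtain rfl : j = 4 - i := by omega
    interval_cases i <;> simp [functional, cf_bmon]
  rw [h2, h3, functional_hess] at h1
  linear_combination -h1

/-- invariants of the associated quartic:
`I2(A_f) = I2(f)/(2⁸·3³·Δ(f))`, `I3(A_f) = −1/(2¹²·3⁶·Δ(f))`,
`Δ(A_f) = I3(f)²/(2²⁴·3⁶·Δ(f)³)`; in particular `I3(A_f) ≠ 0` and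
`Δ(A_f) = 0 ↔ I3(f) = 0`. -/
theorem invariants_of_assoc_quartic (a b c d e : ℂ) (f : P2)
    (hf : f = quartic a b c d e) (hΔ : disc f ≠ 0)
    (μ : ℕ → ℕ → ℂ)
    (hμ : ∀ i j : ℕ, i + j = 4 →
      X 0 ^ i * X 1 ^ j - MvPolynomial.C (μ i j) * hess f ∈ jac f) :
    I2 (assocQuartic μ) = I2 f / (2 ^ 8 * 3 ^ 3 * disc f) ∧
    I3 (assocQuartic μ) = -1 / (2 ^ 12 * 3 ^ 6 * disc f) ∧
    disc (assocQuartic μ) = I3 f ^ 2 / (2 ^ 24 * 3 ^ 6 * disc f ^ 3) ∧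
    I3 (assocQuartic μ) ≠ 0 ∧
    (disc (assocQuartic μ) = 0 ↔ I3 f = 0) := by
  subst hf
  have hm : ∀ i j, i + j = 4 →
      μ i j = weight a b c d e i / (48 * disc (quartic a b c d e)) := fun i j hij => by
    rw [eq_div_iff (by simpa using hΔ), mul_comm]
    exact disc_mul_mu a b c d e _ hij (hμ i j hij)
  have hD : disc (quartic a b c d e) = i2 a b c d e ^ 3 - 27 * i3 a b c d e ^ 2 := by
    rw [disc, I2_quartic, I3_quartic]
  have h2 : I2 (assocQuartic μ) =
      I2 (quartic a b c d e) / (2 ^ 8 * 3 ^ 3 * disc (quartic a b c d e)) := by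
    rw [assocQuartic_eq, I2_quartic, I2_quartic, hm 4 0 rfl, hm 3 1 rfl, hm 2 2 rfl, hm 1 3 rfl,
      hm 0 4 rfl]
    generalize disc (quartic a b c d e) = D at *
    rw [i2]
    field_simp
    rw [hD]
    simp only [weight, i2, i3]
    ring
  have h3 : I3 (assocQuartic μ) = -1 / (2 ^ 12 * 3 ^ 6 * disc (quartic a b c d e)) := by
    rw [assocQuartic_eq, I3_quartic, hm 4 0 rfl, hm 3 1 rfl, hm 2 2 rfl, hm 1 3 rfl, hm 0 4 rfl]
    generalize disc (quartic a b c d e) = D at *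
    rw [i3]
    field_simp
    rw [hD]
    simp only [weight, i2, i3]
    ring
  have h4 : disc (assocQuartic μ) =
      I3 (quartic a b c d e) ^ 2 / (2 ^ 24 * 3 ^ 6 * disc (quartic a b c d e) ^ 3) := by
    rw [disc, h2, h3, I2_quartic, I3_quartic]
    generalize disc (quartic a b c d e) = D at *
    field_simp
    rw [hD]
    ring
  refine ⟨h2, h3, h4, ?_, ?_⟩
  · rw [h3]
    simpa using hΔ
  · rw [h4]
    simp [hΔ]

end
end

section
/- Let f = a·z_1³ + b·z_2³ + c·z_3³ + 6d·z_1z_2z_3 ∈ ℂ[z_1,z_2,z_3] with Δ(f) ≠ 0. Suppose scalars μ_I (|I| = 3) satisfy z^I − μ_I·H(f) ∈ J(f), and let A_f be the associated cubic. Then A_f is again of the form A_f = a'·z_1³ + b'·z_2³ + c'·z_3³ + 6d'·z_1z_2z_3 (i.e., μ_I = 0 for all multi-indices I other than (3,0,0), (0,3,0), (0,0,3), (1,1,1)), and its invariants satisfy: I4(A_f) = −1/(2¹²·3¹²·Δ(f)), I6(A_f) = −I6(f)/(2¹⁵·3¹⁸·Δ(f)²), and Δ(A_f) = −I4(f)³/(2²⁴·3³⁶·Δ(f)⁴).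 In particular I4(A_f) ≠ 0, and Δ(A_f) = 0 if and only if I4(f) = 0. -/
/-! For `f = cubic a b c d` with `Δ(f) ≠ 0` the degree-3 part of `ℂ[z] / J(f)` is a line, the socle,
spanned by the class of `H(f)`. The coordinate on that line is an explicit functional: up to scale,
`L = abc·[z₁z₂z₃] - 2d·(bc·[z₁³] + ca·[z₂³] + ab·[z₃³])`, where `[m]` takes the coefficient of `m`.
A direct computation shows that `L` vanishes on `J(f)` (`socle_jac3`) and that
`L(H(f)) = 216·abc·(abc + 8d³)` (`socle_hess3`). Since `Δ(f) = abc·(abc + 8d³)³`, this value is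
nonzero, so applying `L` to `z^I - μ_I·H(f) ∈ J(f)` yields `μ_I = L(z^I) / L(H(f))`. Hence `μ_I = 0`
unless `z^I` is a cube or `z₁z₂z₃`, and the invariants of `A_f` are rational functions of
`a, b, c, d`, which are compared with those of `f`. -/

open MvPolynomial

noncomputable section

/-- Ternary forms: polynomials in three variables over ℂ. -/
abbrev P3 := MvPolynomial (Fin 3) ℂ

/-- The Hessian determinant of a ternary form. -/
def hess3 (f : P3) : P3 := (Matrix.of fun i j => pderiv i (pderiv j f)).det

/-- The Jacobian ideal `J(f) = (f_1, f_2, f_3)`. -/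
def jac3 (f : P3) : Ideal P3 := Ideal.span {pderiv 0 f, pderiv 1 f, pderiv 2 f}

/-- The ternary cubic `a·z_1³ + b·z_2³ + c·z_3³ + 6d·z_1z_2z_3`. -/
def cubic (a b c d : ℂ) : P3 :=
  MvPolynomial.C a * X 0 ^ 3 + MvPolynomial.C b * X 1 ^ 3 + MvPolynomial.C c * X 2 ^ 3 +
    MvPolynomial.C (6 * d) * X 0 * X 1 * X 2

/-- Coefficient `a` of `z_1³` in a cubic of the above form. -/
def ca (f : P3) : ℂ := coeff (Finsupp.single 0 3) f
/-- Coefficient `b` of `z_2³`. -/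
def cb (f : P3) : ℂ := coeff (Finsupp.single 1 3) f
/-- Coefficient `c` of `z_3³`. -/
def cc (f : P3) : ℂ := coeff (Finsupp.single 2 3) f
/-- Coefficient `d`, i.e. one sixth of the coefficient of `z_1z_2z_3`. -/
def cd (f : P3) : ℂ :=
  coeff (Finsupp.single 0 1 + Finsupp.single 1 1 + Finsupp.single 2 1) f / 6

/-- The Aronhold invariant `I4(f) = abcd − d⁴` of `a·z_1³ + b·z_2³ + c·z_3³ + 6d·z_1z_2z_3`. -/
def I4 (f : P3) : ℂ := ca f * cb f * cc f * cd f - cd f ^ 4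

/-- The Aronhold invariant `I6(f) = a²b²c² − 20abcd³ − 8d⁶`. -/
def I6 (f : P3) : ℂ :=
  ca f ^ 2 * cb f ^ 2 * cc f ^ 2 - 20 * ca f * cb f * cc f * cd f ^ 3 - 8 * cd f ^ 6

/-- The discriminant `Δ(f) = I6(f)² + 64·I4(f)³`. -/
def disc3 (f : P3) : ℂ := I6 f ^ 2 + 64 * I4 f ^ 3

/-- The associated cubic `A_f := Σ_{|I|=3} (6/(i_1!i_2!i_3!))·μ_I·z^I`
built from scalars `μ_I`. -/
def assocCubic (μ : (Fin 3 → ℕ) → ℂ) : P3 :=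
  ∑ I ∈ Finset.Nat.antidiagonalTuple 3 3,
    MvPolynomial.C ((6 : ℂ) / ∏ i, ((I i).factorial : ℂ)) * MvPolynomial.C (μ I) *
      ∏ i, X i ^ I i

/-- The exponent vector of the monomial `z₁^i z₂^j z₃^k`. -/
def expo (i j k : ℕ) : Fin 3 →₀ ℕ := Finsupp.equivFunOnFinite.symm ![i, j, k]

lemma monomial_expo (i j k : ℕ) (r : ℂ) :
    (monomial (expo i j k) r : P3) = C r * (X 0 ^ i * X 1 ^ j * X 2 ^ k) := by
  rw [monomial_eq, Finsupp.prod_fintype _ _ (by simp), Fin.prod_univ_three]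
  rfl

lemma expo_le_iff (i j k i' j' k' : ℕ) :
    expo i j k ≤ expo i' j' k' ↔ i ≤ i' ∧ j ≤ j' ∧ k ≤ k' := by
  simp [Finsupp.le_def, Fin.forall_fin_succ, expo]

lemma expo_inj (i j k i' j' k' : ℕ) :
    expo i j k = expo i' j' k' ↔ i = i' ∧ j = j' ∧ k = k' := by
  simp [expo]

lemma expo_sub (i j k i' j' k' : ℕ) :
    expo i j k - expo i' j' k' = expo (i - i') (j - j') (k - k') := by
  ext t; fin_cases t <;> rfl

lemma coeff_mul_mono (u : P3) (r : ℂ) (i j k i' j' k' : ℕ) :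
    coeff (expo i j k) (u * (C r * (X 0 ^ i' * X 1 ^ j' * X 2 ^ k'))) =
      if i' ≤ i ∧ j' ≤ j ∧ k' ≤ k then coeff (expo (i - i') (j - j') (k - k')) u * r else 0 := by
  rw [← monomial_expo, coeff_mul_monomial']
  simp only [expo_le_iff, expo_sub]

lemma coeff_mono (r : ℂ) (i j k i' j' k' : ℕ) :
    coeff (expo i j k) (C r * (X 0 ^ i' * X 1 ^ j' * X 2 ^ k') : P3) =
      if i' = i ∧ j' = j ∧ k' = k then r else 0 := by
  rw [← monomial_expo, coeff_monomial]
  simp only [expo_inj]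

lemma single_zero_three : Finsupp.single (0 : Fin 3) 3 = expo 3 0 0 := by
  ext t; fin_cases t <;> simp [expo]

lemma single_one_three : Finsupp.single (1 : Fin 3) 3 = expo 0 3 0 := by
  ext t; fin_cases t <;> simp [expo]

lemma single_two_three : Finsupp.single (2 : Fin 3) 3 = expo 0 0 3 := by
  ext t; fin_cases t <;> simp [expo]

lemma single_add_single_add_single :
    Finsupp.single (0 : Fin 3) 1 + Finsupp.single 1 1 + Finsupp.single 2 1 = expo 1 1 1 := by
  ext t; fin_cases t <;> simp [expo]

lemma cubic_eq (a b c d : ℂ) : cubic a b c d =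
    C a * (X 0 ^ 3 * X 1 ^ 0 * X 2 ^ 0) + C b * (X 0 ^ 0 * X 1 ^ 3 * X 2 ^ 0) +
      C c * (X 0 ^ 0 * X 1 ^ 0 * X 2 ^ 3) + C (6 * d) * (X 0 ^ 1 * X 1 ^ 1 * X 2 ^ 1) := by
  rw [cubic]; ring

lemma ca_cubic (a b c d : ℂ) : ca (cubic a b c d) = a := by
  simp only [ca, single_zero_three, cubic_eq, coeff_add, coeff_mono]; norm_num

lemma cb_cubic (a b c d : ℂ) : cb (cubic a b c d) = b := by
  simp only [cb, single_one_three, cubic_eq, coeff_add, coeff_mono]; norm_num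

lemma cc_cubic (a b c d : ℂ) : cc (cubic a b c d) = c := by
  simp only [cc, single_two_three, cubic_eq, coeff_add, coeff_mono]; norm_num

lemma cd_cubic (a b c d : ℂ) : cd (cubic a b c d) = d := by
  simp only [cd, single_add_single_add_single, cubic_eq, coeff_add, coeff_mono]; norm_num

lemma I4_cubic (a b c d : ℂ) : I4 (cubic a b c d) = a * b * c * d - d ^ 4 := by
  rw [I4, ca_cubic, cb_cubic, cc_cubic, cd_cubic]

lemma I6_cubic (a b c d : ℂ) : I6 (cubic a b c d) =
    a ^ 2 * b ^ 2 * c ^ 2 - 20 * a * b * c * d ^ 3 - 8 * d ^ 6 := by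
  rw [I6, ca_cubic, cb_cubic, cc_cubic, cd_cubic]

/-- The functional `abc·[z₁z₂z₃] - 2d·(bc·[z₁³] + ca·[z₂³] + ab·[z₃³])`, which reads off, up to
scale, the coordinate of a polynomial on the socle of `ℂ[z] / J(f)` for `f = cubic a b c d`. -/
def socle (a b c d : ℂ) : P3 →ₗ[ℂ] ℂ :=
  (a * b * c) • lcoeff ℂ (expo 1 1 1) - (2 * d * b * c) • lcoeff ℂ (expo 3 0 0)
    - (2 * d * a * c) • lcoeff ℂ (expo 0 3 0) - (2 * d * a * b) • lcoeff ℂ (expo 0 0 3)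

lemma socle_apply (a b c d : ℂ) (g : P3) : socle a b c d g =
    a * b * c * coeff (expo 1 1 1) g - 2 * d * b * c * coeff (expo 3 0 0) g
      - 2 * d * a * c * coeff (expo 0 3 0) g - 2 * d * a * b * coeff (expo 0 0 3) g := rfl

lemma socle_monomial (a b c d : ℂ) (i j k : ℕ) : socle a b c d (X 0 ^ i * X 1 ^ j * X 2 ^ k) =
    a * b * c * (if i = 1 ∧ j = 1 ∧ k = 1 then 1 else 0)
      - 2 * d * b * c * (if i = 3 ∧ j = 0 ∧ k = 0 then 1 else 0)
      - 2 * d * a * c * (if i = 0 ∧ j = 3 ∧ k = 0 then 1 else 0)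
      - 2 * d * a * b * (if i = 0 ∧ j = 0 ∧ k = 3 then 1 else 0) := by
  have h : (X 0 ^ i * X 1 ^ j * X 2 ^ k : P3) = C 1 * (X 0 ^ i * X 1 ^ j * X 2 ^ k) := by simp
  rw [h]
  simp only [socle_apply, coeff_mono]

lemma pderiv_zero_cubic (a b c d : ℂ) : pderiv 0 (cubic a b c d) =
    C (3 * a) * (X 0 ^ 2 * X 1 ^ 0 * X 2 ^ 0) + C (6 * d) * (X 0 ^ 0 * X 1 ^ 1 * X 2 ^ 1) := by
  have h3 : (C 3 : P3) = 3 := rfl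
  simp [cubic, pderiv_X, h3]
  ring

lemma pderiv_one_cubic (a b c d : ℂ) : pderiv 1 (cubic a b c d) =
    C (3 * b) * (X 0 ^ 0 * X 1 ^ 2 * X 2 ^ 0) + C (6 * d) * (X 0 ^ 1 * X 1 ^ 0 * X 2 ^ 1) := by
  have h3 : (C 3 : P3) = 3 := rfl
  simp [cubic, pderiv_X, h3]
  ring

lemma pderiv_two_cubic (a b c d : ℂ) : pderiv 2 (cubic a b c d) =
    C (3 * c) * (X 0 ^ 0 * X 1 ^ 0 * X 2 ^ 2) + C (6 * d) * (X 0 ^ 1 * X 1 ^ 1 * X 2 ^ 0) := by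
  have h3 : (C 3 : P3) = 3 := rfl
  simp [cubic, pderiv_X, h3]
  ring

lemma socle_jac3 (a b c d : ℂ) (g : P3) (hg : g ∈ jac3 (cubic a b c d)) :
    socle a b c d g = 0 := by
  rw [jac3, Ideal.span, Submodule.mem_span_triple] at hg
  obtain ⟨u, v, w, rfl⟩ := hg
  simp only [smul_eq_mul, pderiv_zero_cubic, pderiv_one_cubic, pderiv_two_cubic, mul_add,
    socle_apply, coeff_add, coeff_mul_mono]
  norm_num
  ring

lemma hess3_cubic (a b c d : ℂ) : hess3 (cubic a b c d) =
    C (216 * (a * b * c + 2 * d ^ 3)) * (X 0 ^ 1 * X 1 ^ 1 * X 2 ^ 1) +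
      C (-216 * a * d ^ 2) * (X 0 ^ 3 * X 1 ^ 0 * X 2 ^ 0) +
      C (-216 * b * d ^ 2) * (X 0 ^ 0 * X 1 ^ 3 * X 2 ^ 0) +
      C (-216 * c * d ^ 2) * (X 0 ^ 0 * X 1 ^ 0 * X 2 ^ 3) := by
  have h6 : (C 6 : P3) = 6 := rfl
  have h3 : (C 3 : P3) = 3 := rfl
  have h2 : (C 2 : P3) = 2 := rfl
  have h216 : (C 216 : P3) = 216 := rfl
  have p6 (i : Fin 3) : pderiv i (6 : P3) = 0 := pderiv_C (a := (6 : ℂ))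
  have p3 (i : Fin 3) : pderiv i (3 : P3) = 0 := pderiv_C (a := (3 : ℂ))
  rw [hess3, Matrix.det_fin_three]
  simp only [Matrix.of_apply, pderiv_zero_cubic, pderiv_one_cubic, pderiv_two_cubic]
  simp [pderiv_X, h6, h3, h2, h216, p6, p3]
  ring

lemma socle_hess3 (a b c d : ℂ) : socle a b c d (hess3 (cubic a b c d)) =
    216 * (a * b * c * (a * b * c + 8 * d ^ 3)) := by
  simp only [hess3_cubic, socle_apply, coeff_add, coeff_mono]
  norm_num
  ring

lemma antidiagonalTuple_three_three : Finset.Nat.antidiagonalTuple 3 3 =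
    {![3, 0, 0], ![0, 3, 0], ![0, 0, 3], ![1, 1, 1], ![2, 1, 0], ![2, 0, 1], ![1, 2, 0],
      ![1, 0, 2], ![0, 2, 1], ![0, 1, 2]} := by
  decide

/-- the associated cubic of `f = a·z_1³ + b·z_2³ + c·z_3³ + 6d·z_1z_2z_3`
is again of that form, with invariants `I4(A_f) = −1/(2¹²·3¹²·Δ(f))`,
`I6(A_f) = −I6(f)/(2¹⁵·3¹⁸·Δ(f)²)`, `Δ(A_f) = −I4(f)³/(2²⁴·3³⁶·Δ(f)⁴)`;
in particular `I4(A_f) ≠ 0` and `Δ(A_f) = 0 ↔ I4(f) = 0`. -/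
theorem invariants_of_assoc_cubic (a b c d : ℂ) (f : P3)
    (hf : f = cubic a b c d) (hΔ : disc3 f ≠ 0)
    (μ : (Fin 3 → ℕ) → ℂ)
    (hμ : ∀ I : Fin 3 → ℕ, (∑ i, I i) = 3 →
      (∏ i, X i ^ I i) - MvPolynomial.C (μ I) * hess3 f ∈ jac3 f) :
    assocCubic μ = cubic (μ ![3, 0, 0]) (μ ![0, 3, 0]) (μ ![0, 0, 3]) (μ ![1, 1, 1]) ∧
    I4 (assocCubic μ) = -1 / (2 ^ 12 * 3 ^ 12 * disc3 f) ∧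
    I6 (assocCubic μ) = -I6 f / (2 ^ 15 * 3 ^ 18 * disc3 f ^ 2) ∧
    disc3 (assocCubic μ) = -I4 f ^ 3 / (2 ^ 24 * 3 ^ 36 * disc3 f ^ 4) ∧
    I4 (assocCubic μ) ≠ 0 ∧
    (disc3 (assocCubic μ) = 0 ↔ I4 f = 0) := by
  have hmem : ∀ I ∈ Finset.Nat.antidiagonalTuple 3 3,
      μ I * (216 * (a * b * c * (a * b * c + 8 * d ^ 3)))
        = socle a b c d (X 0 ^ I 0 * X 1 ^ I 1 * X 2 ^ I 2) := by
    intro I hI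
    have h := hμ I (Finset.Nat.mem_antidiagonalTuple.1 hI)
    rw [hf] at h
    have h0 := socle_jac3 a b c d _ h
    rw [map_sub, ← smul_eq_C_mul, map_smul, socle_hess3, smul_eq_mul, Fin.prod_univ_three] at h0
    linear_combination -h0
  have hI4f : I4 f = a * b * c * d - d ^ 4 := by rw [hf, I4_cubic]
  have hI6f : I6 f = a ^ 2 * b ^ 2 * c ^ 2 - 20 * a * b * c * d ^ 3 - 8 * d ^ 6 := by
    rw [hf, I6_cubic]
  have hD : disc3 f = a * b * c * (a * b * c + 8 * d ^ 3) ^ 3 := by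
    rw [disc3, hI4f, hI6f]; ring
  rw [hD] at hΔ
  have hp : a * b * c ≠ 0 := left_ne_zero_of_mul hΔ
  have hq : a * b * c + 8 * d ^ 3 ≠ 0 := fun h => hΔ (by rw [h]; ring)
  have ha : a ≠ 0 := left_ne_zero_of_mul (left_ne_zero_of_mul hp)
  have hb : b ≠ 0 := right_ne_zero_of_mul (left_ne_zero_of_mul hp)
  have hc : c ≠ 0 := right_ne_zero_of_mul hp
  have hN : (216 : ℂ) * (a * b * c * (a * b * c + 8 * d ^ 3)) ≠ 0 :=
    mul_ne_zero (by norm_num) (mul_ne_zero hp hq)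
  have hμ' : ∀ i j k : ℕ, i + j + k = 3 → μ ![i, j, k] =
      socle a b c d (X 0 ^ i * X 1 ^ j * X 2 ^ k) /
        (216 * (a * b * c * (a * b * c + 8 * d ^ 3))) := by
    intro i j k h
    rw [eq_div_iff hN]
    exact hmem ![i, j, k]
      (Finset.Nat.mem_antidiagonalTuple.2 (by simpa [Fin.sum_univ_three] using h))
  have e300 := hμ' 3 0 0 rfl
  have e030 := hμ' 0 3 0 rfl
  have e003 := hμ' 0 0 3 rfl
  have e111 := hμ' 1 1 1 rfl
  have e210 := hμ' 2 1 0 rfl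
  have e201 := hμ' 2 0 1 rfl
  have e120 := hμ' 1 2 0 rfl
  have e102 := hμ' 1 0 2 rfl
  have e021 := hμ' 0 2 1 rfl
  have e012 := hμ' 0 1 2 rfl
  simp only [socle_monomial] at e300 e030 e003 e111 e210 e201 e120 e102 e021 e012
  norm_num at e300 e030 e003 e111 e210 e201 e120 e102 e021 e012
  have hA : assocCubic μ =
      cubic (μ ![3, 0, 0]) (μ ![0, 3, 0]) (μ ![0, 0, 3]) (μ ![1, 1, 1]) := by
    rw [assocCubic, antidiagonalTuple_three_three]
    simp [Fin.prod_univ_three, Nat.factorial, e210, e201, e120, e102, e021, e012, cubic]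
    ring
  have h4 : I4 (assocCubic μ) = -1 / (2 ^ 12 * 3 ^ 12 * disc3 f) := by
    rw [hA, I4_cubic, hD, e300, e030, e003, e111]
    generalize hqd : a * b * c + 8 * d ^ 3 = q at hq
    field_simp
    rw [← hqd]
    ring
  have h6 : I6 (assocCubic μ) = -I6 f / (2 ^ 15 * 3 ^ 18 * disc3 f ^ 2) := by
    rw [hA, I6_cubic, hD, hI6f, e300, e030, e003, e111]
    generalize a * b * c + 8 * d ^ 3 = q at hq
    field_simp
    ring
  have h64 : I6 f ^ 2 = disc3 f - 64 * I4 f ^ 3 := by rw [disc3]; ring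
  rw [← hD] at hΔ
  -- `I4(A_f)` and `I6(A_f)` determine `Δ(A_f)`, after `I6(f)² = Δ(f) - 64·I4(f)³`.
  have hDA : disc3 (assocCubic μ) = -I4 f ^ 3 / (2 ^ 24 * 3 ^ 36 * disc3 f ^ 4) := by
    have : disc3 (assocCubic μ) = I6 (assocCubic μ) ^ 2 + 64 * I4 (assocCubic μ) ^ 3 := rfl
    rw [this, h4, h6, div_pow, neg_sq, h64]
    generalize disc3 f = D at hΔ
    field_simp
    ring
  refine ⟨hA, h4, h6, hDA, ?_, ?_⟩
  · rw [h4]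
    exact div_ne_zero (by norm_num) (mul_ne_zero (by norm_num) hΔ)
  · rw [hDA, div_eq_zero_iff, neg_eq_zero, pow_eq_zero_iff three_ne_zero]
    exact or_iff_left (mul_ne_zero (by norm_num) (pow_ne_zero 4 hΔ))

end
end

section
/- Define J(s) := −s³·(s³ − 216)³/(2⁶·3³·(s³ + 27)³) for s ∈ ℂ with s³ ≠ −27. Then for every t ∈ ℂ with t ≠ 0, t³ ≠ −27 and t³ ≠ 216, one has (−18/t)³ ≠ −27, J(t) ≠ 0, and J(−18/t) = 1/J(t). -/
/-! In terms of `u = t³`, the substitution `t ↦ −18/t` sends `u` to `v = −5832/u`, where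
`5832 = 18³ = 27 · 216`. Hence `v + 27 = 27(u − 216)/u` and `v − 216 = −216(u + 27)/u`: the
substitution swaps the zeros `u = 216` of `J` with its poles `u = −27` (and `0` with `∞`), which
inverts `J` up to a constant, and the constant is `1`. -/

/-- The absolute invariant `J(c_t) = −t³(t³ − 216)³/(2⁶·3³·(t³ + 27)³)` of the
ternary cubic `c_t`. -/
noncomputable def Jc (s : ℂ) : ℂ :=
  -(s ^ 3 * (s ^ 3 - 216) ^ 3) / (2 ^ 6 * 3 ^ 3 * (s ^ 3 + 27) ^ 3)

/-- for `t ≠ 0`, `t³ ≠ −27`, `t³ ≠ 216` one has `(−18/t)³ ≠ −27`,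
`J(t) ≠ 0` and `J(−18/t) = 1/J(t)`. -/
theorem Jc_involution (t : ℂ) (h0 : t ≠ 0) (h1 : t ^ 3 ≠ -27) (h2 : t ^ 3 ≠ 216) :
    (-18 / t) ^ 3 ≠ -27 ∧ Jc t ≠ 0 ∧ Jc (-18 / t) = 1 / Jc t := by
  have hp : t ^ 3 + 27 ≠ 0 := fun h => h1 (eq_neg_of_add_eq_zero_left h)
  have hm : t ^ 3 - 216 ≠ 0 := sub_ne_zero.mpr h2
  have hplus : (-18 / t) ^ 3 + 27 = 27 * (t ^ 3 - 216) / t ^ 3 := by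
    field_simp
    ring
  have hminus : (-18 / t) ^ 3 - 216 = -216 * (t ^ 3 + 27) / t ^ 3 := by
    field_simp
    ring
  refine ⟨fun h => ?_, ?_, ?_⟩
  · have hne : 27 * (t ^ 3 - 216) / t ^ 3 ≠ 0 :=
      div_ne_zero (mul_ne_zero (by norm_num) hm) (pow_ne_zero 3 h0)
    exact hne (by rw [← hplus, h]; norm_num)
  · unfold Jc
    exact div_ne_zero (neg_ne_zero.mpr (mul_ne_zero (pow_ne_zero 3 h0) (pow_ne_zero 3 hm)))
      (mul_ne_zero (by norm_num) (pow_ne_zero 3 hp))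
  · unfold Jc
    rw [hplus, hminus]
    field_simp
    ring
end
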